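/- arXiv:2401.09198 — 7 statements merged into one kernel-verified Lean document; each statement's English description precedes it below -/
import Mathlib

section
/- Suppose z : ℕ → Z and s : ℕ → W form a trajectory of System 1 (z(n+1) = f₁(z(n)), s(n) = h₁(z(n))) with z(0) = e(s(0)). Then for every n ∈ ℕ, the latent prediction ẑ(n) = f̂₁^[n](ê(s(0))) satisfies ‖z(n) − ẑ(n)‖ ≤ δ_f · (∑_{k=0}^{n−1} L_f^k) + L_f^n · δ_e. -/
/-- For a trajectory of System 1 with `z 0 = e (s 0)`, the latent prediction
`ẑ n = fh^[n] (eh (s 0))` satisfies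
`‖z n - ẑ n‖ ≤ δ_f * (∑_{k<n} L_f^k) + L_f^n * δ_e`. -/
theorem latent_state_error_bound {Z W : Type*}
    [NormedAddCommGroup Z] [NormedSpace ℝ Z]
    [NormedAddCommGroup W] [NormedSpace ℝ W]
    (f₁ fh : Z → Z) (h₁ hh : Z → W) (e eh : W → Z)
    (δf δh δe Lf Lh Le : ℝ)
    (hδf : 0 ≤ δf) (hδh : 0 ≤ δh) (hδe : 0 ≤ δe)
    (hLf : 0 ≤ Lf) (hLh : 0 ≤ Lh) (hLe : 0 ≤ Le)
    (hlipf : ∀ a b, ‖fh a - fh b‖ ≤ Lf * ‖a - b‖)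
    (hliph : ∀ a b, ‖hh a - hh b‖ ≤ Lh * ‖a - b‖)
    (hlipe : ∀ a b, ‖eh a - eh b‖ ≤ Le * ‖a - b‖)
    (herrf : ∀ z, ‖f₁ z - fh z‖ ≤ δf)
    (herrh : ∀ z, ‖h₁ z - hh z‖ ≤ δh)
    (herre : ∀ w, ‖e w - eh w‖ ≤ δe)
    (z : ℕ → Z) (s : ℕ → W)
    (hdyn : ∀ n, z (n + 1) = f₁ (z n))
    (hobs : ∀ n, s n = h₁ (z n))
    (hinit : z 0 = e (s 0)) :
    ∀ n : ℕ, ‖z n - fh^[n] (eh (s 0))‖ ≤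
      δf * (∑ k ∈ Finset.range n, Lf ^ k) + Lf ^ n * δe := by
  intro n
  induction n with
  | zero =>
    have h := herre (s 0)
    rw [← hinit] at h
    simpa using h
  | succ n ih =>
    rw [hdyn, Function.iterate_succ_apply']
    have h1 := norm_sub_le_norm_sub_add_norm_sub (f₁ (z n)) (fh (z n)) (fh (fh^[n] (eh (s 0))))
    have h2 := herrf (z n)
    have h3 := hlipf (z n) (fh^[n] (eh (s 0)))
    have h4 := mul_le_mul_of_nonneg_left ih hLf
    have h5 : δf * (∑ k ∈ Finset.range (n + 1), Lf ^ k) + Lf ^ (n + 1) * δe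
        = δf + Lf * (δf * (∑ k ∈ Finset.range n, Lf ^ k) + Lf ^ n * δe) := by
      rw [geom_sum_succ]
      ring
    rw [h5]
    linarith
end

section
/- (Proposition 1, bound (5), 'ours'.) Suppose z : ℕ → Z and s : ℕ → W form a trajectory of System 1 (z(n+1) = f₁(z(n)), s(n) = h₁(z(n))) with z(0) = e(s(0)), and suppose L_f ≠ 1. Define the latent-space prediction ŝ(n) = ĥ₁(f̂₁^[n](ê(s(0)))). Then for every n ∈ ℕ, ‖s(n) − ŝ(n)‖ ≤ δ_h + L_h · (δ_f · (L_f^n − 1)/(L_f − 1) + L_f^n · δ_e). -/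
/-- Proposition 1, bound (5) ("ours"): for a trajectory of System 1 with `z 0 = e (s 0)`
and `L_f ≠ 1`, the latent-space prediction `ŝ n = hh (fh^[n] (eh (s 0)))` satisfies
`‖s n - ŝ n‖ ≤ δ_h + L_h * (δ_f * (L_f^n - 1)/(L_f - 1) + L_f^n * δ_e)`. -/
theorem ours_prediction_error_bound {Z W : Type*}
    [NormedAddCommGroup Z] [NormedSpace ℝ Z]
    [NormedAddCommGroup W] [NormedSpace ℝ W]
    (f₁ fh : Z → Z) (h₁ hh : Z → W) (e eh : W → Z)
    (δf δh δe Lf Lh Le : ℝ)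
    (hδf : 0 ≤ δf) (hδh : 0 ≤ δh) (hδe : 0 ≤ δe)
    (hLf : 0 ≤ Lf) (hLh : 0 ≤ Lh) (hLe : 0 ≤ Le)
    (hLf1 : Lf ≠ 1)
    (hlipf : ∀ a b, ‖fh a - fh b‖ ≤ Lf * ‖a - b‖)
    (hliph : ∀ a b, ‖hh a - hh b‖ ≤ Lh * ‖a - b‖)
    (hlipe : ∀ a b, ‖eh a - eh b‖ ≤ Le * ‖a - b‖)
    (herrf : ∀ z, ‖f₁ z - fh z‖ ≤ δf)
    (herrh : ∀ z, ‖h₁ z - hh z‖ ≤ δh)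
    (herre : ∀ w, ‖e w - eh w‖ ≤ δe)
    (z : ℕ → Z) (s : ℕ → W)
    (hdyn : ∀ n, z (n + 1) = f₁ (z n))
    (hobs : ∀ n, s n = h₁ (z n))
    (hinit : z 0 = e (s 0)) :
    ∀ n : ℕ, ‖s n - hh (fh^[n] (eh (s 0)))‖ ≤
      δh + Lh * (δf * (Lf ^ n - 1) / (Lf - 1) + Lf ^ n * δe) := by


  have hne : Lf - 1 ≠ 0 := sub_ne_zero.mpr hLf1
  have key : ∀ n : ℕ, ‖z n - fh^[n] (eh (s 0))‖ ≤
      δf * (Lf ^ n - 1) / (Lf - 1) + Lf ^ n * δe := by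
    intro n
    induction n with
    | zero =>
      rw [hinit]
      simpa using herre (s 0)
    | succ k ih =>
      rw [hdyn, Function.iterate_succ_apply']
      have h1 := norm_sub_le_norm_sub_add_norm_sub (f₁ (z k)) (fh (z k))
        (fh (fh^[k] (eh (s 0))))
      have h2 := herrf (z k)
      have h3 := hlipf (z k) (fh^[k] (eh (s 0)))
      have h4 := mul_le_mul_of_nonneg_left ih hLf
      have h5 : δf * (Lf ^ (k + 1) - 1) / (Lf - 1) + Lf ^ (k + 1) * δe =
          δf + Lf * (δf * (Lf ^ k - 1) / (Lf - 1) + Lf ^ k * δe) := by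
        field_simp
        ring
      linarith
  intro n
  rw [hobs n]
  have h1 := norm_sub_le_norm_sub_add_norm_sub (h₁ (z n)) (hh (z n))
    (hh (fh^[n] (eh (s 0))))
  have h2 := herrh (z n)
  have h3 := hliph (z n) (fh^[n] (eh (s 0)))
  have h4 := mul_le_mul_of_nonneg_left (key n) hLh
  linarith
end

section
/- Suppose z : ℕ → Z and s : ℕ → W form a trajectory of System 1 (z(n+1) = f₁(z(n)), s(n) = h₁(z(n))) with e(s(n)) = z(n) for all n. Define the classic autoregressive prediction ŝᵃʳ(n) = (ĥ₁ ∘ f̂₁ ∘ ê)^[n](s(0)). Then for every n ≥ 1, ‖s(n) − ŝᵃʳ(n)‖ ≤ δ + L·‖s(n−1) − ŝᵃʳ(n−1)‖, where δ = δ_h + L_h·δ_f + L_h·L_f·δ_e and L = L_h·L_f·L_e. -/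
/-- Recursive step for the classic autoregressive error: if `e (s n) = z n` for all `n`, then
for `n ≥ 1`, `‖s n - ŝᵃʳ n‖ ≤ δ + L * ‖s (n-1) - ŝᵃʳ (n-1)‖` where
`ŝᵃʳ n = (hh ∘ fh ∘ eh)^[n] (s 0)`, `δ = δ_h + L_h δ_f + L_h L_f δ_e`, `L = L_h L_f L_e`. -/
theorem ar_recursive_error_bound {Z W : Type*}
    [NormedAddCommGroup Z] [NormedSpace ℝ Z]
    [NormedAddCommGroup W] [NormedSpace ℝ W]
    (f₁ fh : Z → Z) (h₁ hh : Z → W) (e eh : W → Z)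
    (δf δh δe Lf Lh Le : ℝ)
    (hδf : 0 ≤ δf) (hδh : 0 ≤ δh) (hδe : 0 ≤ δe)
    (hLf : 0 ≤ Lf) (hLh : 0 ≤ Lh) (hLe : 0 ≤ Le)
    (hlipf : ∀ a b, ‖fh a - fh b‖ ≤ Lf * ‖a - b‖)
    (hliph : ∀ a b, ‖hh a - hh b‖ ≤ Lh * ‖a - b‖)
    (hlipe : ∀ a b, ‖eh a - eh b‖ ≤ Le * ‖a - b‖)
    (herrf : ∀ z, ‖f₁ z - fh z‖ ≤ δf)
    (herrh : ∀ z, ‖h₁ z - hh z‖ ≤ δh)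
    (herre : ∀ w, ‖e w - eh w‖ ≤ δe)
    (z : ℕ → Z) (s : ℕ → W)
    (hdyn : ∀ n, z (n + 1) = f₁ (z n))
    (hobs : ∀ n, s n = h₁ (z n))
    (hinv : ∀ n, e (s n) = z n) :
    ∀ n : ℕ, 1 ≤ n →
      ‖s n - (hh ∘ fh ∘ eh)^[n] (s 0)‖ ≤
        (δh + Lh * δf + Lh * Lf * δe) +
          (Lh * Lf * Le) * ‖s (n - 1) - (hh ∘ fh ∘ eh)^[n - 1] (s 0)‖ := by
  intro n hn
  obtain ⟨m, rfl⟩ : ∃ m, n = m + 1 := ⟨n - 1, by omega⟩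
  rw [Function.iterate_succ_apply', Nat.add_sub_cancel]
  generalize (hh ∘ fh ∘ eh)^[m] (s 0) = t
  simp only [Function.comp_apply]
  have h1 : ‖z m - eh t‖ ≤ δe + Le * ‖s m - t‖ := by
    have h := norm_sub_le_norm_sub_add_norm_sub (z m) (eh (s m)) (eh t)
    have h' := herre (s m)
    rw [hinv] at h'
    linarith [hlipe (s m) t]
  have h2 : ‖z (m + 1) - fh (eh t)‖ ≤ δf + Lf * (δe + Le * ‖s m - t‖) := by
    have h := norm_sub_le_norm_sub_add_norm_sub (z (m + 1)) (fh (z m)) (fh (eh t))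
    have h' := herrf (z m)
    rw [← hdyn] at h'
    linarith [hlipf (z m) (eh t), mul_le_mul_of_nonneg_left h1 hLf]
  have h := norm_sub_le_norm_sub_add_norm_sub (s (m + 1)) (hh (z (m + 1))) (hh (fh (eh t)))
  have h' := herrh (z (m + 1))
  rw [← hobs] at h'
  linarith [hliph (z (m + 1)) (fh (eh t)), mul_le_mul_of_nonneg_left h2 hLh]
end

section
/- (Proposition 1, bound (6), classic autoregressive.) Suppose z : ℕ → Z and s : ℕ → W form a trajectory of System 1 (z(n+1) = f₁(z(n)), s(n) = h₁(z(n))) with e(s(n)) = z(n) for all n, and suppose L = L_h·L_f·L_e ≠ 1. Define the classic autoregressive prediction ŝᵃʳ(n) = (ĥ₁ ∘ f̂₁ ∘ ê)^[n](s(0)). Then for every n ≥ 1, ‖s(n) − ŝᵃʳ(n)‖ ≤ δ · (L^n − 1)/(L − 1), where δ = δ_h + L_h·δ_f + L_h·L_f·δ_e. -/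
/-- Proposition 1, bound (6), classic autoregressive: if `e (s n) = z n` for all `n` and
`L = L_h L_f L_e ≠ 1`, then for all `n ≥ 1`,
`‖s n - ŝᵃʳ n‖ ≤ δ * (L^n - 1)/(L - 1)` where `ŝᵃʳ n = (hh ∘ fh ∘ eh)^[n] (s 0)` and
`δ = δ_h + L_h δ_f + L_h L_f δ_e`. -/
theorem ar_prediction_error_bound {Z W : Type*}
    [NormedAddCommGroup Z] [NormedSpace ℝ Z]
    [NormedAddCommGroup W] [NormedSpace ℝ W]
    (f₁ fh : Z → Z) (h₁ hh : Z → W) (e eh : W → Z)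
    (δf δh δe Lf Lh Le : ℝ)
    (hδf : 0 ≤ δf) (hδh : 0 ≤ δh) (hδe : 0 ≤ δe)
    (hLf : 0 ≤ Lf) (hLh : 0 ≤ Lh) (hLe : 0 ≤ Le)
    (hL1 : Lh * Lf * Le ≠ 1)
    (hlipf : ∀ a b, ‖fh a - fh b‖ ≤ Lf * ‖a - b‖)
    (hliph : ∀ a b, ‖hh a - hh b‖ ≤ Lh * ‖a - b‖)
    (hlipe : ∀ a b, ‖eh a - eh b‖ ≤ Le * ‖a - b‖)
    (herrf : ∀ z, ‖f₁ z - fh z‖ ≤ δf)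
    (herrh : ∀ z, ‖h₁ z - hh z‖ ≤ δh)
    (herre : ∀ w, ‖e w - eh w‖ ≤ δe)
    (z : ℕ → Z) (s : ℕ → W)
    (hdyn : ∀ n, z (n + 1) = f₁ (z n))
    (hobs : ∀ n, s n = h₁ (z n))
    (hinv : ∀ n, e (s n) = z n) :
    ∀ n : ℕ, 1 ≤ n →
      ‖s n - (hh ∘ fh ∘ eh)^[n] (s 0)‖ ≤
        (δh + Lh * δf + Lh * Lf * δe) *
          ((Lh * Lf * Le) ^ n - 1) / (Lh * Lf * Le - 1) := by
  have key : ∀ n : ℕ, ‖s n - (hh ∘ fh ∘ eh)^[n] (s 0)‖ ≤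
        (δh + Lh * δf + Lh * Lf * δe) *
          ((Lh * Lf * Le) ^ n - 1) / (Lh * Lf * Le - 1) := by
    intro n
    induction n with
    | zero => simp
    | succ n ih =>
      have hL : Lh * Lf * Le - 1 ≠ 0 := sub_ne_zero.mpr hL1
      rw [Function.iterate_succ_apply']
      generalize (hh ∘ fh ∘ eh)^[n] (s 0) = w at ih ⊢
      simp only [Function.comp_apply]
      have h1 : ‖z n - eh w‖ ≤ δe + Le * ‖s n - w‖ := by
        have a := herre (s n)
        rw [hinv] at a
        have b := hlipe (s n) w
        have c := norm_sub_le_norm_sub_add_norm_sub (z n) (eh (s n)) (eh w)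
        linarith
      have h2 : ‖z (n + 1) - fh (eh w)‖ ≤ δf + Lf * ‖z n - eh w‖ := by
        have a := herrf (z n)
        rw [← hdyn] at a
        have b := hlipf (z n) (eh w)
        have c := norm_sub_le_norm_sub_add_norm_sub (z (n + 1)) (fh (z n)) (fh (eh w))
        linarith
      have h3 : ‖s (n + 1) - hh (fh (eh w))‖ ≤ δh + Lh * ‖z (n + 1) - fh (eh w)‖ := by
        have a := herrh (z (n + 1))
        rw [← hobs] at a
        have b := hliph (z (n + 1)) (fh (eh w))
        have c := norm_sub_le_norm_sub_add_norm_sub (s (n + 1)) (hh (z (n + 1))) (hh (fh (eh w)))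
        linarith
      calc ‖s (n + 1) - hh (fh (eh w))‖
          ≤ δh + Lh * (δf + Lf * (δe + Le * ((δh + Lh * δf + Lh * Lf * δe) *
          ((Lh * Lf * Le) ^ n - 1) / (Lh * Lf * Le - 1)))) := by
            refine h3.trans ?_
            gcongr
            refine h2.trans ?_
            gcongr
            refine h1.trans ?_
            gcongr
        _ = _ := by
            rw [pow_succ]
            generalize (Lh * Lf * Le) ^ n = p
            field_simp
            ring
  exact fun n _ => key n
end

section
/- Suppose z : ℕ → Z and s : ℕ → W form a trajectory of System 1 (z(n+1) = f₁(z(n)), s(n) = h₁(z(n))) with e(s(n)) = z(n) for all n. Define the classic autoregressive prediction ŝᵃʳ(n) = (ĥ₁ ∘ f̂₁ ∘ ê)^[n](s(0)). Then for every n ∈ ℕ, ‖s(n) − ŝᵃʳ(n)‖ ≤ δ · ∑_{k=0}^{n−1} L^k, where δ = δ_h + L_h·δ_f + L_h·L_f·δ_e and L = L_h·L_f·L_e. -/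
/-- Classic autoregressive error bound (sum form): if `e (s n) = z n` for all `n`, then
`‖s n - ŝᵃʳ n‖ ≤ δ * ∑_{k<n} L^k` where `ŝᵃʳ n = (hh ∘ fh ∘ eh)^[n] (s 0)`,
`δ = δ_h + L_h δ_f + L_h L_f δ_e` and `L = L_h L_f L_e`. -/
theorem ar_prediction_error_bound_sum {Z W : Type*}
    [NormedAddCommGroup Z] [NormedSpace ℝ Z]
    [NormedAddCommGroup W] [NormedSpace ℝ W]
    (f₁ fh : Z → Z) (h₁ hh : Z → W) (e eh : W → Z)
    (δf δh δe Lf Lh Le : ℝ)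
    (hδf : 0 ≤ δf) (hδh : 0 ≤ δh) (hδe : 0 ≤ δe)
    (hLf : 0 ≤ Lf) (hLh : 0 ≤ Lh) (hLe : 0 ≤ Le)
    (hlipf : ∀ a b, ‖fh a - fh b‖ ≤ Lf * ‖a - b‖)
    (hliph : ∀ a b, ‖hh a - hh b‖ ≤ Lh * ‖a - b‖)
    (hlipe : ∀ a b, ‖eh a - eh b‖ ≤ Le * ‖a - b‖)
    (herrf : ∀ z, ‖f₁ z - fh z‖ ≤ δf)
    (herrh : ∀ z, ‖h₁ z - hh z‖ ≤ δh)
    (herre : ∀ w, ‖e w - eh w‖ ≤ δe)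
    (z : ℕ → Z) (s : ℕ → W)
    (hdyn : ∀ n, z (n + 1) = f₁ (z n))
    (hobs : ∀ n, s n = h₁ (z n))
    (hinv : ∀ n, e (s n) = z n) :
    ∀ n : ℕ,
      ‖s n - (hh ∘ fh ∘ eh)^[n] (s 0)‖ ≤
        (δh + Lh * δf + Lh * Lf * δe) *
          ∑ k ∈ Finset.range n, (Lh * Lf * Le) ^ k := by
  intro n
  induction n with
  | zero => simp
  | succ n ih =>
    rw [Function.iterate_succ_apply', geom_sum_succ]
    set w := (hh ∘ fh ∘ eh)^[n] (s 0) with hw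
    set S := ∑ k ∈ Finset.range n, (Lh * Lf * Le) ^ k with hS
    simp only [Function.comp_apply]
    have h1 : ‖z n - eh w‖ ≤ δe + Le * ‖s n - w‖ := by
      have h := norm_sub_le_norm_sub_add_norm_sub (z n) (eh (s n)) (eh w)
      have h' := herre (s n)
      rw [hinv] at h'
      linarith [hlipe (s n) w]
    have h2 : ‖z (n + 1) - fh (eh w)‖ ≤ δf + Lf * ‖z n - eh w‖ := by
      have h := norm_sub_le_norm_sub_add_norm_sub (z (n + 1)) (fh (z n)) (fh (eh w))
      have h' := herrf (z n)
      rw [← hdyn] at h'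
      linarith [hlipf (z n) (eh w)]
    have h3 : ‖s (n + 1) - hh (fh (eh w))‖ ≤ δh + Lh * ‖z (n + 1) - fh (eh w)‖ := by
      have h := norm_sub_le_norm_sub_add_norm_sub (s (n + 1)) (hh (z (n + 1))) (hh (fh (eh w)))
      have h' := herrh (z (n + 1))
      rw [← hobs] at h'
      linarith [hliph (z (n + 1)) (fh (eh w))]
    calc ‖s (n + 1) - hh (fh (eh w))‖
        ≤ δh + Lh * (δf + Lf * (δe + Le *
            ((δh + Lh * δf + Lh * Lf * δe) * S))) := by
          refine h3.trans ?_
          gcongr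
          refine h2.trans ?_
          gcongr
          refine h1.trans ?_
          gcongr
      _ = _ := by ring
end

section
/- (Comparison of the two upper bounds in Proposition 1.) Let δ_f, δ_h, δ_e, L_f, L_h, L_e be nonnegative reals with L_h·L_e ≥ 1, and let n ≥ 1 be an integer. Then the latent-space ('ours') upper bound is no larger than the classic autoregressive upper bound: δ_h + L_h·δ_f·(∑_{k=0}^{n−1} L_f^k) + L_h·L_f^n·δ_e ≤ (δ_h + L_h·δ_f + L_h·L_f·δ_e) · ∑_{k=0}^{n−1} (L_h·L_f·L_e)^k. -/
/-- Comparison of the two upper bounds in Proposition 1: if `L_h * L_e ≥ 1` and `n ≥ 1`, the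
latent-space ("ours") upper bound is no larger than the classic autoregressive upper bound. -/
theorem ours_bound_le_ar_bound
    (δf δh δe Lf Lh Le : ℝ)
    (hδf : 0 ≤ δf) (hδh : 0 ≤ δh) (hδe : 0 ≤ δe)
    (hLf : 0 ≤ Lf) (hLh : 0 ≤ Lh) (hLe : 0 ≤ Le)
    (hLhLe : 1 ≤ Lh * Le)
    (n : ℕ) (hn : 1 ≤ n) :
    δh + Lh * δf * (∑ k ∈ Finset.range n, Lf ^ k) + Lh * Lf ^ n * δe ≤
      (δh + Lh * δf + Lh * Lf * δe) * ∑ k ∈ Finset.range n, (Lh * Lf * Le) ^ k := by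
  obtain ⟨m, rfl⟩ : ∃ m, n = m + 1 := ⟨n - 1, by omega⟩
  have hL : Lf ≤ Lh * Lf * Le := by nlinarith
  have hS : ∑ k ∈ Finset.range (m + 1), Lf ^ k ≤
      ∑ k ∈ Finset.range (m + 1), (Lh * Lf * Le) ^ k :=
    Finset.sum_le_sum fun k _ => pow_le_pow_left₀ hLf hL k
  have h1 : Lf ^ 0 ≤ ∑ k ∈ Finset.range (m + 1), Lf ^ k :=
    Finset.single_le_sum (f := fun k => Lf ^ k) (fun k _ => pow_nonneg hLf k) (by simp)
  have h2 : Lf ^ m ≤ ∑ k ∈ Finset.range (m + 1), Lf ^ k :=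
    Finset.single_le_sum (f := fun k => Lf ^ k) (fun k _ => pow_nonneg hLf k) (by simp)
  rw [pow_zero] at h1
  have a1 := mul_le_mul_of_nonneg_left (h1.trans hS) hδh
  have a2 := mul_le_mul_of_nonneg_left hS (mul_nonneg hLh hδf)
  have a3 := mul_le_mul_of_nonneg_left (h2.trans hS) (mul_nonneg (mul_nonneg hLh hLf) hδe)
  have e : Lh * Lf ^ (m + 1) * δe = Lh * Lf * δe * Lf ^ m := by ring
  rw [e, add_mul, add_mul]
  linarith
end

section
/- (Proposition 2, error-bound part.) Let S and Z be metric spaces, let Φ : ℝ → S → S satisfy dist(Φ(t, a), Φ(t, b)) ≤ exp(L·t) · dist(a, b) for all a, b ∈ S and all t ≥ 0 (where L ≥ 0), and let O : S → Z be c-expansive for some c > 0. Let s₀ ∈ S, let ẑ ∈ Z satisfy dist(ẑ, O(s₀)) ≤ δ for some δ ≥ 0, and let ŝ₀ ∈ S satisfy dist(ẑ, O(ŝ₀)) ≤ dist(ẑ, O(s')) for every s' ∈ S. Then for every t ≥ 0, dist(Φ(t, s₀), Φ(t, ŝ₀)) ≤ (2/c) · δ · exp(L·t). -/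
/-- Proposition 2, error-bound part: if the flow `Φ` satisfies the Grönwall estimate
`dist (Φ t a) (Φ t b) ≤ exp (L * t) * dist a b` for `t ≥ 0`, `O` is `c`-expansive,
`zh` is a noisy observation with `dist zh (O s₀) ≤ δ`, and `sh₀` minimizes the distance of its
observation to `zh`, then `dist (Φ t s₀) (Φ t sh₀) ≤ (2 / c) * δ * exp (L * t)` for `t ≥ 0`. -/
theorem state_estimation_error_bound {S Z : Type*} [MetricSpace S] [MetricSpace Z]
    (Φ : ℝ → S → S) (L : ℝ) (hL : 0 ≤ L)
    (hΦ : ∀ t : ℝ, 0 ≤ t → ∀ a b : S,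
      dist (Φ t a) (Φ t b) ≤ Real.exp (L * t) * dist a b)
    (O : S → Z) (c : ℝ) (hc : 0 < c)
    (hexp : ∀ a b : S, c * dist a b ≤ dist (O a) (O b))
    (s₀ sh₀ : S) (zh : Z) (δ : ℝ) (hδ : 0 ≤ δ)
    (hnoise : dist zh (O s₀) ≤ δ)
    (hmin : ∀ s' : S, dist zh (O sh₀) ≤ dist zh (O s')) :
    ∀ t : ℝ, 0 ≤ t → dist (Φ t s₀) (Φ t sh₀) ≤ (2 / c) * δ * Real.exp (L * t) := by
  intro t ht
  have h1 := hexp s₀ sh₀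
  have h2 := dist_triangle_left (O s₀) (O sh₀) zh
  have h3 := hmin s₀
  have h4 : dist s₀ sh₀ ≤ (2 / c) * δ := by
    rw [div_mul_eq_mul_div, le_div_iff₀ hc]
    linarith
  calc dist (Φ t s₀) (Φ t sh₀) ≤ Real.exp (L * t) * dist s₀ sh₀ := hΦ t ht _ _
    _ ≤ Real.exp (L * t) * ((2 / c) * δ) :=
        mul_le_mul_of_nonneg_left h4 (Real.exp_pos _).le
    _ = (2 / c) * δ * Real.exp (L * t) := mul_comm _ _
end
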